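/- Suppose 0 < s < ∞ and 1 ≤ p < ∞, and let g be holomorphic on the unit disc D. Then the multiplication operator M_g maps Q_s into the Besov space B^p if and only if g is identically zero. -/

import Mathlib

open MeasureTheory Metric Complex Real Filter Set

noncomputable section

/-- `f` is holomorphic on the open unit disc. -/
def HolOn (f : ℂ → ℂ) : Prop := DifferentiableOn ℂ f (Metric.ball (0:ℂ) 1)

/-- The normalized Lebesgue area measure on `ℂ` (so the unit disc has total mass 1). -/
def dA : Measure ℂ := (ENNReal.ofReal π)⁻¹ • volume

/-- Bounded holomorphic functions on the unit disc. -/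
def Hinf : Set (ℂ → ℂ) :=
  {f | HolOn f ∧ ∃ C : ℝ, ∀ z ∈ Metric.ball (0:ℂ) 1, ‖f z‖ ≤ C}

/-- The Bloch space. -/
def Bloch : Set (ℂ → ℂ) :=
  {f | HolOn f ∧ ∃ C : ℝ, ∀ z ∈ Metric.ball (0:ℂ) 1,
      (1 - ‖z‖ ^ 2) * ‖deriv f z‖ ≤ C}

/-- The little Bloch space: `(1-|z|²)|f'(z)| → 0` as `|z| → 1⁻`. -/
def littleBloch : Set (ℂ → ℂ) :=
  {f | HolOn f ∧ ∀ ε : ℝ, 0 < ε → ∃ r : ℝ, r < 1 ∧ ∀ z ∈ Metric.ball (0:ℂ) 1,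
      r < ‖z‖ → (1 - ‖z‖ ^ 2) * ‖deriv f z‖ < ε}

/-- The `α`-logarithmic Bloch space. -/
def BlochLog (α : ℝ) : Set (ℂ → ℂ) :=
  {f | HolOn f ∧ ∃ C : ℝ, ∀ z ∈ Metric.ball (0:ℂ) 1,
      (1 - ‖z‖ ^ 2) * (Real.log (2 / (1 - ‖z‖ ^ 2))) ^ α *
        ‖deriv f z‖ ≤ C}

/-- The Besov space `B¹`: holomorphic `f` with `∫_D |f''| dA < ∞`. -/
def Besov1 : Set (ℂ → ℂ) :=
  {f | HolOn f ∧ ∫⁻ z in Metric.ball (0:ℂ) 1,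
      ENNReal.ofReal (‖deriv (deriv f) z‖) ∂dA < ⊤}

/-- The Besov space `Bᵖ` (`1 < p < ∞`): `∫_D (1-|z|)^(p-2) |f'(z)|^p dA(z) < ∞`. -/
def Besov (p : ℝ) : Set (ℂ → ℂ) :=
  {f | HolOn f ∧ ∫⁻ z in Metric.ball (0:ℂ) 1,
      ENNReal.ofReal ((1 - ‖z‖) ^ (p - 2) * ‖deriv f z‖ ^ p) ∂dA < ⊤}

open scoped Classical in
/-- The Besov space `Bᵖ` for all `1 ≤ p < ∞` (with the special definition at `p = 1`). -/
def BesovFull (p : ℝ) : Set (ℂ → ℂ) := if p = 1 then Besov1 else Besov p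

/-- The Möbius transformation `φ_a(z) = (a-z)/(1 - conj a · z)`. -/
def phi (a z : ℂ) : ℂ := (a - z) / (1 - (starRingEnd ℂ) a * z)

/-- The space `Q_s`. -/
def Qs (s : ℝ) : Set (ℂ → ℂ) :=
  {f | HolOn f ∧ ⨆ a ∈ Metric.ball (0:ℂ) 1, ∫⁻ z in Metric.ball (0:ℂ) 1,
      ENNReal.ofReal (‖deriv f z‖ ^ 2 *
        (1 - ‖phi a z‖ ^ 2) ^ s) ∂dA < ⊤}

/-- The space `Q_{s,log,α}`. -/
def QsLog (s α : ℝ) : Set (ℂ → ℂ) :=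
  {f | HolOn f ∧ ⨆ a ∈ Metric.ball (0:ℂ) 1,
      (ENNReal.ofReal ((Real.log (2 / (1 - ‖a‖))) ^ (2 * α)) *
        ∫⁻ z in Metric.ball (0:ℂ) 1,
          ENNReal.ofReal (‖deriv f z‖ ^ 2 *
            (1 - ‖phi a z‖ ^ 2) ^ s) ∂dA) < ⊤}

/-- The Volterra operator `T_g(f)(z) = ∫_0^z g'(ξ) f(ξ) dξ` (along the segment from 0 to z). -/
def Tg (g f : ℂ → ℂ) : ℂ → ℂ :=
  fun z => z * ∫ t in (0:ℝ)..1, deriv g ((t : ℂ) * z) * f ((t : ℂ) * z)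

/-- The companion operator `I_g(f)(z) = ∫_0^z g(ξ) f'(ξ) dξ` (along the segment from 0 to z). -/
def Ig (g f : ℂ → ℂ) : ℂ → ℂ :=
  fun z => z * ∫ t in (0:ℝ)..1, g ((t : ℂ) * z) * deriv f ((t : ℂ) * z)

/-- The multiplication operator `M_g(f) = g · f`. -/
def Mg (g f : ℂ → ℂ) : ℂ → ℂ := fun z => g z * f z

/-- `T` maps `X` into `Y`. -/
def MapsInto (T : (ℂ → ℂ) → (ℂ → ℂ)) (X Y : Set (ℂ → ℂ)) : Prop :=
  ∀ f ∈ X, T f ∈ Y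

/-- The Hardy space `H^q`. -/
def Hardy (q : ℝ) : Set (ℂ → ℂ) :=
  {f | HolOn f ∧ ∃ C : ℝ, ∀ r : ℝ, 0 < r → r < 1 →
      (1 / (2 * π)) * ∫ t in (0:ℝ)..(2 * π),
        ‖f ((r : ℂ) * Complex.exp ((t : ℂ) * Complex.I))‖ ^ q ≤ C}

/-- An inner function: bounded holomorphic with radial boundary values of modulus 1 a.e. -/
def IsInner (g : ℂ → ℂ) : Prop :=
  g ∈ Hinf ∧ ∀ᵐ t : ℝ ∂(volume.restrict (Set.Ioc (0:ℝ) (2 * π))),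
    Filter.Tendsto (fun r : ℝ => ‖g ((r : ℂ) * Complex.exp ((t : ℂ) * Complex.I))‖)
      (nhdsWithin 1 (Set.Iio 1)) (nhds 1)

/-- `X` has the f-property (division by inner functions). -/
def FProperty (X : Set (ℂ → ℂ)) : Prop :=
  ∀ h ∈ X, ∀ g : ℂ → ℂ, IsInner g →
    (fun z => h z / g z) ∈ Hardy 1 → (fun z => h z / g z) ∈ X

/-- The space of multipliers `M(X,Y)`. -/
def Mult (X Y : Set (ℂ → ℂ)) : Set (ℂ → ℂ) :=
  {g | HolOn g ∧ ∀ f ∈ X, (fun z => g z * f z) ∈ Y}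

end

/-!
For `|ζ| = 1` and `c ∈ {-1, 0, 1}` the functions `F_c(z) = (1 - conj ζ · z)^(ic)` lie in every
`Q_s`. With `n` the order of the derivative defining `B^p`, the quotients `(g F_c)⁽ⁿ⁾ / F_c` are
polynomials in `c`, and combining three of them isolates `g(z) / (ζ - z)ⁿ`. If `M_g` maps `Q_s`
into `B^p`, the sub-mean value property turns this into
`|g(rζ)|^p ≤ μ (ball (rζ) ((1 - r) / 2))` for a finite measure `μ` depending on `ζ`. Hence `g` is
bounded on every radius, and `∑ |g(r_k ζ)|^p < ∞` for `r_k = 1 - 4⁻ᵏ` because the balls are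
disjoint.

By Baire's theorem both bounds are uniform for `ζ` in some arc. A lens which is symmetric about a
point `c / 2` of the disc and whose closure lies over that arc has a boundary made of two circular
arcs, one on the unit circle and the other its reflection under `z ↦ c - z`. So
`∑ |g(r_k z) g(r_k (c - z))|^p` is bounded on the boundary of the lens, hence inside it, by the
maximum principle for `ℓ^p`-valued functions. Its terms tend to `|g(z) g(c - z)|^p`, which must
vanish, and so `g = 0`.
-/

section SubMeanValue

variable {E : Type*} [NormedAddCommGroup E] [NormedSpace ℂ E] [CompleteSpace E]
  {v : ℂ → E} {a : ℂ} {R : ℝ}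

lemma two_pi_mul_enorm_le_lintegral_circleMap (hv : DifferentiableOn ℂ v (ball a R)) {w : ℂ}
    (hw : w ∈ ball (0 : ℂ) R) :
    ENNReal.ofReal (2 * π) * ‖v a‖ₑ ≤
      ∫⁻ θ in Ioc 0 (2 * π), ‖v (a + circleMap 0 1 θ * w)‖ₑ := by
  have hmaps : MapsTo (fun u ↦ a + u * w) (closedBall 0 1) (ball a R) := fun u hu ↦ by
    rw [mem_closedBall_zero_iff] at hu
    rw [mem_ball_zero_iff] at hw
    rw [mem_ball_iff_norm, add_sub_cancel_left, norm_mul]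
    exact (mul_le_of_le_one_left (norm_nonneg w) hu).trans_lt hw
  have hdiff : DiffContOnCl ℂ (fun u ↦ v (a + u * w)) (ball 0 |1|) := by
    refine DifferentiableOn.diffContOnCl ?_
    rw [abs_one, closure_ball _ one_ne_zero]
    exact hv.comp (by fun_prop) hmaps
  have hmean : (2 * π) • v a = ∫ θ in Ioc 0 (2 * π), v (a + circleMap 0 1 θ * w) := by
    have := hdiff.circleAverage
    rw [circleAverage_def, inv_smul_eq_iff₀ two_pi_pos.ne', zero_mul, add_zero,
      intervalIntegral.integral_of_le two_pi_pos.le] at this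
    exact this.symm
  calc ENNReal.ofReal (2 * π) * ‖v a‖ₑ
      = ‖(2 * π) • v a‖ₑ := by rw [enorm_smul, Real.enorm_eq_ofReal two_pi_pos.le]
    _ ≤ _ := hmean ▸ enorm_integral_le_lintegral_enorm _

lemma lintegral_ball_zero_comp_mul_left (f : ℂ → ENNReal) {u : ℂ} (hu : ‖u‖ = 1) :
    ∫⁻ w in ball 0 R, f (u * w) = ∫⁻ w in ball 0 R, f w := by
  let e := rotation ⟨u, mem_sphere_zero_iff_norm.2 hu⟩
  have hpre : e ⁻¹' ball 0 R = ball 0 R := by simp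
  conv_lhs => rw [← hpre]
  exact e.measurePreserving.setLIntegral_comp_preimage_emb
    e.toHomeomorph.measurableEmbedding f (ball 0 R)

/-- Averaging over rotations about `a` turns the mean value property on circles into one on
discs. -/
lemma enorm_mul_volume_ball_le_lintegral (hv : DifferentiableOn ℂ v (ball a R)) :
    ‖v a‖ₑ * volume (ball a R) ≤ ∫⁻ z in ball a R, ‖v z‖ₑ := by
  have hcont : ContinuousOn (fun q : ℂ × ℝ ↦ ‖v (a + circleMap 0 1 q.2 * q.1)‖ₑ)
      (ball 0 R ×ˢ univ) := by
    refine (hv.continuousOn.comp (by fun_prop) fun q hq ↦ ?_).enorm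
    simpa [circleMap] using hq.1
  have hmeas : AEMeasurable (fun q : ℂ × ℝ ↦ ‖v (a + circleMap 0 1 q.2 * q.1)‖ₑ)
      ((volume.restrict (ball 0 R)).prod (volume.restrict (Ioc 0 (2 * π)))) := by
    rw [Measure.prod_restrict]
    exact (hcont.aemeasurable (measurableSet_ball.prod .univ)).mono_measure
      (Measure.restrict_mono (prod_mono_right (subset_univ _)) le_rfl)
  have htranslate : ∫⁻ z in ball a R, ‖v z‖ₑ = ∫⁻ w in ball 0 R, ‖v (a + w)‖ₑ := by
    rw [← (measurePreserving_add_left volume a).setLIntegral_comp_preimage_emb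
      (measurableEmbedding_addLeft a)]
    simp [preimage_add_ball]
  have hpi : ENNReal.ofReal (2 * π) ≠ 0 := by simpa using two_pi_pos
  rw [← ENNReal.mul_le_mul_iff_right hpi ENNReal.ofReal_ne_top]
  calc ENNReal.ofReal (2 * π) * (‖v a‖ₑ * volume (ball a R))
      = ∫⁻ _ in ball (0 : ℂ) R, ENNReal.ofReal (2 * π) * ‖v a‖ₑ := by
        rw [setLIntegral_const, Complex.volume_ball, Complex.volume_ball, mul_assoc]
    _ ≤ ∫⁻ w in ball 0 R, ∫⁻ θ in Ioc 0 (2 * π), ‖v (a + circleMap 0 1 θ * w)‖ₑ :=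
        setLIntegral_mono' measurableSet_ball fun w hw ↦
          two_pi_mul_enorm_le_lintegral_circleMap hv hw
    _ = ∫⁻ θ in Ioc 0 (2 * π), ∫⁻ w in ball 0 R, ‖v (a + circleMap 0 1 θ * w)‖ₑ :=
        lintegral_lintegral_swap hmeas
    _ = ∫⁻ _ in Ioc 0 (2 * π), ∫⁻ z in ball a R, ‖v z‖ₑ := by
        refine lintegral_congr fun θ ↦ ?_
        rw [htranslate, lintegral_ball_zero_comp_mul_left (fun w ↦ ‖v (a + w)‖ₑ) (by simp)]
    _ = ENNReal.ofReal (2 * π) * ∫⁻ z in ball a R, ‖v z‖ₑ := by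
        rw [setLIntegral_const, Real.volume_Ioc, sub_zero, mul_comm]

lemma enorm_rpow_mul_volume_ball_le_lintegral {p : ℝ} (hp : 1 ≤ p) (hR : 0 < R)
    (hv : DifferentiableOn ℂ v (ball a R)) :
    ‖v a‖ₑ ^ p * volume (ball a R) ≤ ∫⁻ z in ball a R, ‖v z‖ₑ ^ p := by
  have hp₀ : 0 < p := by linarith
  set V := volume (ball a R) with hV
  have hV₀ : V ≠ 0 := (measure_ball_pos _ _ hR).ne'
  have hVtop : V ≠ ⊤ := measure_ball_lt_top.ne
  have hHolder : ∫⁻ z in ball a R, ‖v z‖ₑ ≤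
      (∫⁻ z in ball a R, ‖v z‖ₑ ^ p) ^ (1 / p) * V ^ (1 - 1 / p) := by
    have := eLpNorm'_le_eLpNorm'_mul_rpow_measure_univ one_pos hp
      (hv.continuousOn.aestronglyMeasurable measurableSet_ball (μ := volume))
    simpa [eLpNorm', ← hV, -Complex.volume_ball] using this
  have hroot : ‖v a‖ₑ * V ^ (1 / p) ≤ (∫⁻ z in ball a R, ‖v z‖ₑ ^ p) ^ (1 / p) := by
    have hW₀ : V ^ (1 - 1 / p) ≠ 0 := (ENNReal.rpow_pos hV₀.bot_lt hVtop).ne'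
    have hWtop : V ^ (1 - 1 / p) ≠ ⊤ := ENNReal.rpow_ne_top_of_ne_zero hV₀ hVtop
    rw [← ENNReal.mul_le_mul_iff_left hW₀ hWtop, mul_assoc, ← ENNReal.rpow_add _ _ hV₀ hVtop,
      add_sub_cancel, ENNReal.rpow_one]
    exact (enorm_mul_volume_ball_le_lintegral hv).trans hHolder
  have := ENNReal.rpow_le_rpow hroot hp₀.le
  rwa [ENNReal.mul_rpow_of_nonneg _ _ hp₀.le, ← ENNReal.rpow_mul, ← ENNReal.rpow_mul,
    one_div_mul_cancel hp₀.ne', ENNReal.rpow_one, ENNReal.rpow_one] at this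

end SubMeanValue

section Besov

lemma rpow_le_two_rpow_abs_mul_rpow {x y : ℝ} (hx : 0 < x) (hy : 0 < y) (hxy : x ≤ 2 * y)
    (hyx : y ≤ 2 * x) (e : ℝ) : x ^ e ≤ 2 ^ |e| * y ^ e := by
  rcases le_total 0 e with he | he
  · rw [abs_of_nonneg he, ← Real.mul_rpow two_pos.le hy.le]
    exact Real.rpow_le_rpow hx.le hxy he
  · rw [abs_of_nonpos he, Real.rpow_neg two_pos.le, ← Real.inv_rpow two_pos.le,
      ← Real.mul_rpow (by positivity) hy.le]
    exact Real.rpow_le_rpow_of_nonpos (by positivity) (by linarith) he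

lemma dA_ball (a : ℂ) {R : ℝ} (hR : 0 ≤ R) : dA (ball a R) = ENNReal.ofReal (R ^ 2) := by
  have hpi : (NNReal.pi : ENNReal) = ENNReal.ofReal π := by
    rw [← NNReal.coe_real_pi, ENNReal.ofReal_coe_nnreal]
  have hpi₀ : ENNReal.ofReal π ≠ 0 := by simpa using pi_pos
  rw [dA, Measure.smul_apply, smul_eq_mul, Complex.volume_ball, hpi, mul_left_comm,
    ENNReal.inv_mul_cancel hpi₀ ENNReal.ofReal_ne_top, mul_one, ENNReal.ofReal_pow hR]

lemma one_sub_norm_mem_Icc_of_mem_ball {E : Type*} [SeminormedAddCommGroup E] {a z : E}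
    (hz : z ∈ ball a ((1 - ‖a‖) / 2)) :
    1 - ‖z‖ ∈ Icc ((1 - ‖a‖) / 2) (2 * (1 - ‖a‖)) := by
  rw [mem_ball_iff_norm] at hz
  have := norm_sub_norm_le z a
  have := norm_sub_norm_le a z
  rw [norm_sub_rev] at this
  constructor <;> linarith

lemma norm_rpow_mul_sq_le_lintegral_dA {E : Type*} [NormedAddCommGroup E] [NormedSpace ℂ E]
    [CompleteSpace E] {v : ℂ → E} {p : ℝ} (hp : 1 ≤ p) {a : ℂ} {R : ℝ} (hR : 0 < R)
    (hv : DifferentiableOn ℂ v (ball a R)) :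
    ENNReal.ofReal (‖v a‖ ^ p * R ^ 2) ≤ ∫⁻ z in ball a R, ENNReal.ofReal (‖v z‖ ^ p) ∂dA := by
  have h := mul_le_mul_right (enorm_rpow_mul_volume_ball_le_lintegral hp hR hv)
    (ENNReal.ofReal π)⁻¹
  rw [mul_left_comm, ← smul_eq_mul (a := (ENNReal.ofReal π)⁻¹), ← Measure.smul_apply, ← dA,
    dA_ball a hR.le] at h
  rw [ENNReal.ofReal_mul (by positivity), dA, Measure.restrict_smul, lintegral_smul_measure,
    smul_eq_mul]
  simpa only [← ENNReal.ofReal_rpow_of_nonneg (norm_nonneg _) (zero_le_one.trans hp),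
    ofReal_norm] using h

lemma rpow_mul_norm_rpow_le_lintegral {E : Type*} [NormedAddCommGroup E] [NormedSpace ℂ E]
    [CompleteSpace E] {v : ℂ → E} {p : ℝ} (hp : 1 ≤ p) (e : ℝ)
    (hv : DifferentiableOn ℂ v (ball 0 1)) {a : ℂ} (ha : ‖a‖ < 1) :
    ENNReal.ofReal ((1 - ‖a‖) ^ (e + 2) * ‖v a‖ ^ p) ≤ ENNReal.ofReal (4 * 2 ^ |e|) *
      ∫⁻ z in ball a ((1 - ‖a‖) / 2), ENNReal.ofReal ((1 - ‖z‖) ^ e * ‖v z‖ ^ p) ∂dA := by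
  set d := 1 - ‖a‖
  have hd₀ : 0 < d := by linarith
  have hsub : ball a (d / 2) ⊆ ball 0 1 := fun z hz ↦ by
    rw [mem_ball_zero_iff]
    linarith [(one_sub_norm_mem_Icc_of_mem_ball hz).1]
  have hweight : ∀ z ∈ ball a (d / 2), ENNReal.ofReal (d ^ e * ‖v z‖ ^ p) ≤
      ENNReal.ofReal (2 ^ |e|) * ENNReal.ofReal ((1 - ‖z‖) ^ e * ‖v z‖ ^ p) := fun z hz ↦ by
    obtain ⟨hz₁, hz₂⟩ := one_sub_norm_mem_Icc_of_mem_ball hz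
    rw [← ENNReal.ofReal_mul (by positivity), ← mul_assoc]
    gcongr
    exact rpow_le_two_rpow_abs_mul_rpow hd₀ (by linarith) (by linarith) hz₂ e
  calc ENNReal.ofReal (d ^ (e + 2) * ‖v a‖ ^ p)
      = ENNReal.ofReal (4 * d ^ e) * ENNReal.ofReal (‖v a‖ ^ p * (d / 2) ^ 2) := by
        rw [← ENNReal.ofReal_mul (by positivity), Real.rpow_add hd₀, Real.rpow_two]
        ring_nf
    _ ≤ ENNReal.ofReal (4 * d ^ e) *
          ∫⁻ z in ball a (d / 2), ENNReal.ofReal (‖v z‖ ^ p) ∂dA :=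
        mul_le_mul_right (norm_rpow_mul_sq_le_lintegral_dA hp (half_pos hd₀) (hv.mono hsub)) _
    _ = ENNReal.ofReal 4 *
          ∫⁻ z in ball a (d / 2), ENNReal.ofReal (d ^ e * ‖v z‖ ^ p) ∂dA := by
        simp only [ENNReal.ofReal_mul (Real.rpow_nonneg hd₀.le e)]
        rw [ENNReal.ofReal_mul zero_le_four, mul_assoc,
          lintegral_const_mul' _ _ ENNReal.ofReal_ne_top]
    _ ≤ ENNReal.ofReal 4 * (ENNReal.ofReal (2 ^ |e|) *
          ∫⁻ z in ball a (d / 2), ENNReal.ofReal ((1 - ‖z‖) ^ e * ‖v z‖ ^ p) ∂dA) := by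
        rw [← lintegral_const_mul' (ENNReal.ofReal (2 ^ |e|)) _ ENNReal.ofReal_ne_top]
        exact mul_le_mul_right (setLIntegral_mono' measurableSet_ball hweight) _
    _ = _ := by rw [← mul_assoc, ← ENNReal.ofReal_mul zero_le_four]

open scoped Classical in
/-- The order of the derivative which defines `BesovFull p`. -/
noncomputable def besovOrder (p : ℝ) : ℕ := if p = 1 then 2 else 1

/-- The measure `(1-|z|)^(np-2) |f⁽ⁿ⁾(z)|^p dA(z)` on the unit disc, `n = besovOrder p`, whose
total mass is the integral defining `BesovFull p`. -/
noncomputable def besovMeasure (p : ℝ) (f : ℂ → ℂ) : Measure ℂ :=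
  (dA.restrict (ball 0 1)).withDensity fun z ↦ ENNReal.ofReal
    ((1 - ‖z‖) ^ (besovOrder p * p - 2) * ‖iteratedDeriv (besovOrder p) f z‖ ^ p)

lemma mem_BesovFull_iff {p : ℝ} {f : ℂ → ℂ} :
    f ∈ BesovFull p ↔ HolOn f ∧ besovMeasure p f univ < ⊤ := by
  rw [besovMeasure, withDensity_apply _ .univ, Measure.restrict_univ, besovOrder]
  by_cases hp : p = 1
  · simp [BesovFull, hp, Besov1, iteratedDeriv_succ]
  · simp [BesovFull, hp, Besov, iteratedDeriv_one]

lemma HolOn.iteratedDeriv {f : ℂ → ℂ} (hf : HolOn f) (n : ℕ) : HolOn (iteratedDeriv n f) := by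
  induction n with
  | zero => rwa [iteratedDeriv_zero]
  | succ n ih => rw [iteratedDeriv_succ]; exact ih.deriv isOpen_ball

lemma ofReal_rpow_le_besovMeasure_ball {p : ℝ} (hp : 1 ≤ p) {f : ℂ → ℂ} (hf : HolOn f) {a : ℂ}
    (ha : ‖a‖ < 1) :
    ENNReal.ofReal (((1 - ‖a‖) ^ besovOrder p * ‖iteratedDeriv (besovOrder p) f a‖) ^ p) ≤
      ENNReal.ofReal (4 * 2 ^ |besovOrder p * p - 2|) *
        besovMeasure p f (ball a ((1 - ‖a‖) / 2)) := by
  have ha' : 0 < 1 - ‖a‖ := by linarith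
  have hsub : ball a ((1 - ‖a‖) / 2) ⊆ ball 0 1 := fun z hz ↦ by
    rw [mem_ball_zero_iff]
    linarith [(one_sub_norm_mem_Icc_of_mem_ball hz).1]
  have h := rpow_mul_norm_rpow_le_lintegral hp (besovOrder p * p - 2)
    (hf.iteratedDeriv (besovOrder p)) ha
  rw [sub_add_cancel] at h
  rwa [besovMeasure, withDensity_apply _ measurableSet_ball,
    Measure.restrict_restrict measurableSet_ball, inter_eq_left.2 hsub,
    Real.mul_rpow (by positivity) (norm_nonneg _), ← Real.rpow_natCast_mul ha'.le]

end Besov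

section Qs

lemma norm_one_sub_conj_mul_sq (a z : ℂ) :
    ‖1 - (starRingEnd ℂ) a * z‖ ^ 2 = (1 - ‖a‖ ^ 2) * (1 - ‖z‖ ^ 2) + ‖a - z‖ ^ 2 := by
  simp only [← Complex.normSq_eq_norm_sq, Complex.normSq_apply, sub_re, sub_im, one_re, one_im,
    mul_re, mul_im, conj_re, conj_im]
  ring

lemma one_sub_norm_phi_sq {a z : ℂ} (ha : ‖a‖ < 1) (hz : ‖z‖ < 1) :
    1 - ‖phi a z‖ ^ 2 = (1 - ‖a‖ ^ 2) * (1 - ‖z‖ ^ 2) /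
      ((1 - ‖a‖ ^ 2) * (1 - ‖z‖ ^ 2) + ‖a - z‖ ^ 2) := by
  have ha₀ : 0 < 1 - ‖a‖ ^ 2 := sub_pos.2 (pow_lt_one₀ (norm_nonneg a) ha two_ne_zero)
  have hz₀ : 0 < 1 - ‖z‖ ^ 2 := sub_pos.2 (pow_lt_one₀ (norm_nonneg z) hz two_ne_zero)
  rw [phi, norm_div, div_pow, norm_one_sub_conj_mul_sq, one_sub_div (by positivity),
    add_sub_cancel_right]

lemma one_sub_norm_phi_sq_nonneg {a z : ℂ} (ha : ‖a‖ < 1) (hz : ‖z‖ < 1) :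
    0 ≤ 1 - ‖phi a z‖ ^ 2 := by
  have ha₀ : 0 ≤ 1 - ‖a‖ ^ 2 := sub_nonneg.2 (pow_le_one₀ (norm_nonneg a) ha.le)
  have hz₀ : 0 ≤ 1 - ‖z‖ ^ 2 := sub_nonneg.2 (pow_le_one₀ (norm_nonneg z) hz.le)
  rw [one_sub_norm_phi_sq ha hz]
  positivity

lemma one_sub_norm_sq_le_two_mul_norm_sub {ζ z : ℂ} (hζ : ‖ζ‖ = 1) (hz : ‖z‖ < 1) :
    1 - ‖z‖ ^ 2 ≤ 2 * ‖z - ζ‖ := by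
  have := norm_sub_norm_le ζ z
  rw [norm_sub_rev, hζ] at this
  nlinarith [norm_nonneg z]

lemma one_sub_norm_phi_sq_le {ζ a z : ℂ} (hζ : ‖ζ‖ = 1) (ha : ‖a‖ < 1) (hz : ‖z‖ < 1) :
    1 - ‖phi a z‖ ^ 2 ≤ 4 * (‖z - ζ‖ * ‖a - ζ‖) / (‖z - ζ‖ + ‖a - ζ‖) ^ 2 := by
  have ha₀ : 0 < 1 - ‖a‖ ^ 2 := sub_pos.2 (pow_lt_one₀ (norm_nonneg a) ha two_ne_zero)
  have hz₀ : 0 < 1 - ‖z‖ ^ 2 := sub_pos.2 (pow_lt_one₀ (norm_nonneg z) hz two_ne_zero)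
  have haζ := one_sub_norm_sq_le_two_mul_norm_sub hζ ha
  have hzζ := one_sub_norm_sq_le_two_mul_norm_sub hζ hz
  have hdist : (‖z - ζ‖ - ‖a - ζ‖) ^ 2 ≤ ‖a - z‖ ^ 2 := by
    rw [← sq_abs, norm_sub_rev a z]
    gcongr
    simpa using abs_norm_sub_norm_le (z - ζ) (a - ζ)
  rw [one_sub_norm_phi_sq ha hz]
  set ρ := ‖z - ζ‖
  set σ := ‖a - ζ‖
  set x := (1 - ‖a‖ ^ 2) * (1 - ‖z‖ ^ 2)
  have hρ : 0 < ρ := by linarith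
  have hσ : 0 < σ := by linarith
  have : 0 < x := by positivity
  have hx : x ≤ 4 * (ρ * σ) := by
    calc x ≤ (2 * σ) * (2 * ρ) := mul_le_mul haζ hzζ hz₀.le (by positivity)
      _ = 4 * (ρ * σ) := by ring
  calc x / (x + ‖a - z‖ ^ 2)
      ≤ x / (x + (ρ - σ) ^ 2) := by gcongr
    _ ≤ 4 * (ρ * σ) / (4 * (ρ * σ) + (ρ - σ) ^ 2) := by
        rw [div_le_div_iff₀ (by positivity) (by positivity)]
        nlinarith [sq_nonneg (ρ - σ)]
    _ = 4 * (ρ * σ) / (ρ + σ) ^ 2 := by ring_nf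

/-- Up to scaling, the radial majorant of `(1 - |φ_a(z)|²)^s / |z - ζ|²` for `|ζ| = 1`: the
variable `t` stands for `|z - ζ| / |a - ζ|`. -/
noncomputable def radialKernel (s t : ℝ) : ℝ := t ^ (s - 2) * (1 + t) ^ (-(2 * s))

lemma rpow_div_sq_le_radialKernel {s x ρ σ : ℝ} (hs : 0 ≤ s) (hρ : 0 < ρ) (hσ : 0 < σ)
    (hx₀ : 0 ≤ x) (hx : x ≤ 4 * (ρ * σ) / (ρ + σ) ^ 2) :
    x ^ s / ρ ^ 2 ≤ 4 ^ s * (σ ^ 2)⁻¹ * radialKernel s (ρ / σ) := by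
  have hu : 0 < ρ / σ := by positivity
  have heq : 4 * (ρ * σ) / (ρ + σ) ^ 2 = 4 * (ρ / σ * ((1 + ρ / σ) ^ 2)⁻¹) := by
    field_simp
    ring
  calc x ^ s / ρ ^ 2
      ≤ (4 * (ρ / σ * ((1 + ρ / σ) ^ 2)⁻¹)) ^ s / ρ ^ 2 := by
        gcongr
        exact hx.trans_eq heq
    _ = 4 ^ s * ((ρ / σ) ^ s / (ρ / σ) ^ 2 * (σ ^ 2)⁻¹ * (((1 + ρ / σ) ^ 2) ^ s)⁻¹) := by
        rw [Real.mul_rpow zero_le_four (by positivity), Real.mul_rpow hu.le (by positivity),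
          Real.inv_rpow (by positivity)]
        field_simp
    _ = 4 ^ s * (σ ^ 2)⁻¹ * radialKernel s (ρ / σ) := by
        rw [radialKernel, Real.rpow_sub hu, Real.rpow_two, Real.rpow_neg (by positivity),
          Real.rpow_mul (by positivity), Real.rpow_two]
        ring

lemma integrable_radialKernel_norm {s : ℝ} (hs : 0 < s) :
    Integrable (fun w : ℂ ↦ radialKernel s ‖w‖) := by
  rw [integrable_fun_norm_addHaar, Complex.finrank_real_complex]
  have htop : (fun t : ℝ ↦ (1 + t) ^ (-(2 * s))) =O[atTop] (· ^ (-(2 * s))) := by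
    refine Asymptotics.IsBigO.of_bound 1 ?_
    filter_upwards [eventually_gt_atTop 0] with t ht
    rw [one_mul, Real.norm_of_nonneg (by positivity), Real.norm_of_nonneg (by positivity)]
    exact Real.rpow_le_rpow_of_nonpos ht (by linarith) (by linarith)
  have hcont : ContinuousOn (fun t : ℝ ↦ (1 + t) ^ (-(2 * s))) (Ici 0) := fun t (ht : 0 ≤ t) ↦
    ((continuousAt_const.add continuousAt_id).rpow_const
      (Or.inl (add_pos_of_pos_of_nonneg one_pos ht).ne')).continuousWithinAt
  have hbot : (fun t : ℝ ↦ (1 + t) ^ (-(2 * s))) =O[nhdsWithin 0 (Ioi 0)] (· ^ (-(0 : ℝ))) := by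
    simp only [neg_zero, Real.rpow_zero]
    exact ((hcont 0 self_mem_Ici).mono Ioi_subset_Ici_self).isBigO_one ℝ
  refine (mellin_convergent_of_isBigO_scalar
    ((hcont.mono Ioi_subset_Ici_self).locallyIntegrableOn measurableSet_Ioi) htop
    (by linarith : s < 2 * s) hbot hs).congr_fun (fun t (ht : 0 < t) ↦ ?_) measurableSet_Ioi
  have hpow : t ^ (s - 1) = t ^ (s - 2) * t := by
    rw [← Real.rpow_add_one ht.ne']
    ring_nf
  simp only [radialKernel, smul_eq_mul, hpow]
  ring

lemma lintegral_comp_norm_sub_div (f : ℝ → ENNReal) (ζ : ℂ) {σ : ℝ} (hσ : 0 < σ) :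
    ∫⁻ z : ℂ, f (‖z - ζ‖ / σ) = ENNReal.ofReal (σ ^ 2) * ∫⁻ w : ℂ, f ‖w‖ := by
  have hemb : MeasurableEmbedding (σ⁻¹ • · : ℂ → ℂ) :=
    (Homeomorph.smulOfNeZero σ⁻¹ (inv_ne_zero hσ.ne')).measurableEmbedding
  have hnorm (w : ℂ) : ‖w‖ / σ = ‖σ⁻¹ • w‖ := by
    rw [norm_smul, norm_inv, Real.norm_of_nonneg hσ.le, div_eq_inv_mul]
  rw [lintegral_sub_right_eq_self (fun w : ℂ ↦ f (‖w‖ / σ)) ζ]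
  simp only [hnorm]
  rw [← hemb.lintegral_map (fun w ↦ f ‖w‖), Measure.map_addHaar_smul _ (inv_ne_zero hσ.ne'),
    lintegral_smul_measure, Complex.finrank_real_complex, smul_eq_mul]
  simp

lemma exists_lintegral_phi_div_le {s : ℝ} (hs : 0 < s) {ζ : ℂ} (hζ : ‖ζ‖ = 1) :
    ∃ B < ⊤, ∀ a ∈ ball (0 : ℂ) 1, ∫⁻ z in ball (0 : ℂ) 1,
      ENNReal.ofReal ((1 - ‖phi a z‖ ^ 2) ^ s / ‖z - ζ‖ ^ 2) ≤ B := by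
  set J := ∫⁻ w : ℂ, ENNReal.ofReal (radialKernel s ‖w‖) with hJ
  have hJtop : J < ⊤ := by
    have hnonneg (w : ℂ) : 0 ≤ radialKernel s ‖w‖ := by rw [radialKernel]; positivity
    rw [hJ, ← hasFiniteIntegral_iff_ofReal (.of_forall hnonneg)]
    exact (integrable_radialKernel_norm hs).2
  have hne : ∀ w ∈ ball (0 : ℂ) 1, 0 < ‖w - ζ‖ := fun w hw ↦
    norm_sub_pos_iff.2 fun h ↦ by simp [h, hζ] at hw
  refine ⟨ENNReal.ofReal (4 ^ s) * J, ENNReal.mul_lt_top ENNReal.ofReal_lt_top hJtop,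
    fun a ha ↦ ?_⟩
  have hσ := hne a ha
  rw [mem_ball_zero_iff] at ha
  set σ := ‖a - ζ‖
  calc ∫⁻ z in ball (0 : ℂ) 1, ENNReal.ofReal ((1 - ‖phi a z‖ ^ 2) ^ s / ‖z - ζ‖ ^ 2)
      ≤ ∫⁻ z in ball (0 : ℂ) 1, ENNReal.ofReal (4 ^ s * (σ ^ 2)⁻¹) *
          ENNReal.ofReal (radialKernel s (‖z - ζ‖ / σ)) := by
        refine setLIntegral_mono' measurableSet_ball fun z hz ↦ ?_
        rw [← ENNReal.ofReal_mul (by positivity)]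
        have hρ := hne z hz
        rw [mem_ball_zero_iff] at hz
        exact ENNReal.ofReal_le_ofReal (rpow_div_sq_le_radialKernel hs.le hρ hσ
          (one_sub_norm_phi_sq_nonneg ha hz) (one_sub_norm_phi_sq_le hζ ha hz))
    _ ≤ ∫⁻ z : ℂ, ENNReal.ofReal (4 ^ s * (σ ^ 2)⁻¹) *
          ENNReal.ofReal (radialKernel s (‖z - ζ‖ / σ)) := setLIntegral_le_lintegral _ _
    _ = ENNReal.ofReal (4 ^ s * (σ ^ 2)⁻¹) * (ENNReal.ofReal (σ ^ 2) * J) := by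
        rw [lintegral_const_mul' _ _ ENNReal.ofReal_ne_top,
          lintegral_comp_norm_sub_div (fun t ↦ ENNReal.ofReal (radialKernel s t)) ζ hσ]
    _ = ENNReal.ofReal (4 ^ s) * J := by
        rw [← mul_assoc, ← ENNReal.ofReal_mul (by positivity),
          inv_mul_cancel_right₀ (by positivity)]

lemma mem_Qs_of_norm_deriv_le {s C : ℝ} (hs : 0 < s) {ζ : ℂ} (hζ : ‖ζ‖ = 1) {f : ℂ → ℂ}
    (hf : HolOn f) (hC : ∀ z ∈ ball (0 : ℂ) 1, ‖deriv f z‖ ≤ C / ‖z - ζ‖) : f ∈ Qs s := by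
  obtain ⟨B, hB, hle⟩ := exists_lintegral_phi_div_le hs hζ
  have hpi : (ENNReal.ofReal π)⁻¹ < ⊤ := by simpa using pi_pos
  refine ⟨hf, lt_of_le_of_lt (b := (ENNReal.ofReal π)⁻¹ * (ENNReal.ofReal (C ^ 2) * B))
    (iSup₂_le fun a ha ↦ ?_)
    (ENNReal.mul_lt_top hpi (ENNReal.mul_lt_top ENNReal.ofReal_lt_top hB))⟩
  rw [dA, Measure.restrict_smul, lintegral_smul_measure, smul_eq_mul]
  gcongr
  calc ∫⁻ z in ball (0 : ℂ) 1, ENNReal.ofReal (‖deriv f z‖ ^ 2 * (1 - ‖phi a z‖ ^ 2) ^ s)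
      ≤ ∫⁻ z in ball (0 : ℂ) 1, ENNReal.ofReal (C ^ 2) *
          ENNReal.ofReal ((1 - ‖phi a z‖ ^ 2) ^ s / ‖z - ζ‖ ^ 2) := by
        refine setLIntegral_mono' measurableSet_ball fun z hz ↦ ?_
        have hphi := one_sub_norm_phi_sq_nonneg (mem_ball_zero_iff.1 ha) (mem_ball_zero_iff.1 hz)
        rw [← ENNReal.ofReal_mul (by positivity), mul_div_left_comm, mul_comm, ← div_pow]
        gcongr
        exact hC z hz
    _ ≤ ENNReal.ofReal (C ^ 2) * B := by
        rw [lintegral_const_mul' _ _ ENNReal.ofReal_ne_top]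
        exact mul_le_mul_right (hle a ha) _

end Qs

section TestFunctions

/-- The test function `(1 - conj ζ · z)^(ic)`, for the principal branch of the power: it is
bounded above and below on the unit disc, while its logarithmic derivative is `-ic / (ζ - z)`. -/
noncomputable def testFun (ζ : ℂ) (c : ℝ) (z : ℂ) : ℂ :=
  exp (c * I * log (1 - (starRingEnd ℂ) ζ * z))

variable {ζ z : ℂ} {c : ℝ}

lemma norm_testFun_mem_Icc (hc : |c| ≤ 1) :
    ‖testFun ζ c z‖ ∈ Icc (Real.exp (-π)) (Real.exp π) := by
  set θ := arg (1 - (starRingEnd ℂ) ζ * z)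
  have hnorm : ‖testFun ζ c z‖ = Real.exp (-(c * θ)) := by
    rw [testFun, Complex.norm_exp]
    simp [log_re, log_im, θ]
  have hθ : |c * θ| ≤ π := by
    rw [abs_mul]
    exact (mul_le_of_le_one_left (abs_nonneg θ) hc).trans (abs_arg_le_pi _)
  rw [abs_le] at hθ
  rw [hnorm, mem_Icc, Real.exp_le_exp, Real.exp_le_exp]
  constructor <;> linarith

lemma testFun_ne_zero : testFun ζ c z ≠ 0 := Complex.exp_ne_zero _

lemma testFun_zero (ζ : ℂ) : testFun ζ 0 = 1 := by
  ext z
  simp [testFun]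

lemma one_sub_conj_mul_mem_slitPlane (hζ : ‖ζ‖ = 1) (hz : z ∈ ball (0 : ℂ) 1) :
    1 - (starRingEnd ℂ) ζ * z ∈ slitPlane := by
  have hre := re_le_norm ((starRingEnd ℂ) ζ * z)
  rw [norm_mul, norm_conj, hζ, one_mul] at hre
  rw [mem_ball_zero_iff] at hz
  left
  rw [sub_re, one_re]
  linarith

lemma hasDerivAt_testFun (hζ : ‖ζ‖ = 1) (hz : z ∈ ball (0 : ℂ) 1) :
    HasDerivAt (testFun ζ c) (testFun ζ c z * (-(c * I) * (ζ - z)⁻¹)) z := by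
  have hslit := one_sub_conj_mul_mem_slitPlane hζ hz
  have hlin : HasDerivAt (fun z ↦ 1 - (starRingEnd ℂ) ζ * z) (-(starRingEnd ℂ) ζ) z := by
    simpa using ((hasDerivAt_id z).const_mul ((starRingEnd ℂ) ζ)).const_sub 1
  refine ((hlin.clog hslit).const_mul (c * I)).cexp.congr_deriv ?_
  have hfactor : 1 - (starRingEnd ℂ) ζ * z = (starRingEnd ℂ) ζ * (ζ - z) := by
    rw [mul_sub, conj_mul', hζ]
    norm_num
  have hne := slitPlane_ne_zero hslit
  rw [hfactor] at hne ⊢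
  have := left_ne_zero_of_mul hne
  have := right_ne_zero_of_mul hne
  rw [testFun, hfactor]
  field_simp

lemma holOn_testFun (hζ : ‖ζ‖ = 1) : HolOn (testFun ζ c) := fun _ hz ↦
  (hasDerivAt_testFun hζ hz).differentiableAt.differentiableWithinAt

lemma testFun_mem_Qs {s : ℝ} (hs : 0 < s) (hζ : ‖ζ‖ = 1) (hc : |c| ≤ 1) :
    testFun ζ c ∈ Qs s := by
  refine mem_Qs_of_norm_deriv_le hs hζ (holOn_testFun hζ) (C := Real.exp π) fun z hz ↦ ?_
  rw [(hasDerivAt_testFun hζ hz).deriv, norm_mul, norm_mul, norm_neg, norm_mul, norm_I, mul_one,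
    norm_real, norm_inv, norm_sub_rev, div_eq_mul_inv]
  gcongr
  · exact (norm_testFun_mem_Icc hc).2
  · exact mul_le_of_le_one_left (by positivity) hc

variable {g : ℂ → ℂ}

lemma HolOn.hasDerivAt (hg : HolOn g) (hz : z ∈ ball (0 : ℂ) 1) : HasDerivAt g (deriv g z) z :=
  (hg.differentiableAt (isOpen_ball.mem_nhds hz)).hasDerivAt

lemma HolOn.Mg_testFun (hg : HolOn g) (hζ : ‖ζ‖ = 1) : HolOn (Mg g (testFun ζ c)) :=
  DifferentiableOn.mul hg (holOn_testFun hζ)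

lemma deriv_Mg_testFun (hg : HolOn g) (hζ : ‖ζ‖ = 1) (hz : z ∈ ball (0 : ℂ) 1) :
    deriv (Mg g (testFun ζ c)) z =
      testFun ζ c z * (deriv g z - c * I * (ζ - z)⁻¹ * g z) := by
  refine ((hg.hasDerivAt hz).mul (hasDerivAt_testFun hζ hz)).deriv.trans ?_
  ring

lemma sub_ne_zero_of_mem_ball (hζ : ‖ζ‖ = 1) (hz : z ∈ ball (0 : ℂ) 1) : ζ - z ≠ 0 :=
  sub_ne_zero.2 fun h ↦ by simp [← h, hζ] at hz

lemma deriv_deriv_Mg_testFun (hg : HolOn g) (hζ : ‖ζ‖ = 1) (hz : z ∈ ball (0 : ℂ) 1) :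
    deriv (deriv (Mg g (testFun ζ c))) z = testFun ζ c z * (deriv (deriv g) z -
      2 * (c * I) * (ζ - z)⁻¹ * deriv g z + c * I * (c * I - 1) * (ζ - z)⁻¹ ^ 2 * g z) := by
  have hderiv : deriv (Mg g (testFun ζ c)) =ᶠ[nhds z]
      fun z ↦ testFun ζ c z * (deriv g z - c * I * (ζ - z)⁻¹ * g z) := by
    filter_upwards [isOpen_ball.mem_nhds hz] with w hw using deriv_Mg_testFun hg hζ hw
  have hinv : HasDerivAt (fun z ↦ (ζ - z)⁻¹) ((ζ - z)⁻¹ ^ 2) z := by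
    refine (((hasDerivAt_id z).const_sub ζ).inv (sub_ne_zero_of_mem_ball hζ hz)).congr_deriv ?_
    rw [neg_neg, one_div, inv_pow, id]
  have hg' : HolOn (deriv g) := hg.deriv isOpen_ball
  rw [hderiv.deriv_eq]
  refine ((hasDerivAt_testFun hζ hz).mul
    ((hg'.hasDerivAt hz).sub
      ((hinv.const_mul (c * I)).mul (hg.hasDerivAt hz)))).deriv.trans ?_
  simp only [Pi.sub_apply, Pi.mul_apply]
  ring

/-- The quotients `(g F_c)⁽ⁿ⁾ / F_c` with `F_c = testFun ζ c` are polynomials of degree `n` in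
`c`, and a difference quotient in `c` isolates the term `(ζ - z)⁻ⁿ g(z)`. -/
lemma norm_inv_pow_mul_le_sum {n : ℕ} (hn : n = 1 ∨ n = 2) (hg : HolOn g) (hζ : ‖ζ‖ = 1)
    (hz : z ∈ ball (0 : ℂ) 1) :
    ‖(ζ - z)⁻¹ ^ n * g z‖ ≤ ∑ c ∈ ({-1, 0, 1} : Finset ℝ),
      ‖iteratedDeriv n (Mg g (testFun ζ c)) z / testFun ζ c z‖ := by
  rw [Finset.sum_insert (by norm_num), Finset.sum_insert (by norm_num), Finset.sum_singleton]
  set D : ℝ → ℂ := fun c ↦ iteratedDeriv n (Mg g (testFun ζ c)) z / testFun ζ c z with hD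
  change _ ≤ ‖D (-1)‖ + (‖D 0‖ + ‖D 1‖)
  rcases hn with rfl | rfl
  · have hD₁ (c : ℝ) : D c = deriv g z - c * I * (ζ - z)⁻¹ * g z := by
      simp only [hD]
      rw [iteratedDeriv_one, deriv_Mg_testFun hg hζ hz, mul_div_cancel_left₀ _ testFun_ne_zero]
    have hdiff : (ζ - z)⁻¹ ^ 1 * g z = I * (D 1 - D 0) := by
      rw [hD₁, hD₁]
      push_cast
      linear_combination (ζ - z)⁻¹ * g z * I_sq
    rw [hdiff, norm_mul, norm_I, one_mul]
    linarith [norm_sub_le (D 1) (D 0), norm_nonneg (D (-1))]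
  · have hD₂ (c : ℝ) : D c = deriv (deriv g) z - 2 * (c * I) * (ζ - z)⁻¹ * deriv g z +
        c * I * (c * I - 1) * (ζ - z)⁻¹ ^ 2 * g z := by
      simp only [hD]
      rw [iteratedDeriv_succ, iteratedDeriv_one, deriv_deriv_Mg_testFun hg hζ hz,
        mul_div_cancel_left₀ _ testFun_ne_zero]
    have hdiff : (ζ - z)⁻¹ ^ 2 * g z = D 0 - (D 1 + D (-1)) / 2 := by
      rw [hD₂, hD₂, hD₂]
      push_cast
      linear_combination (ζ - z)⁻¹ ^ 2 * g z * I_sq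
    have hhalf : ‖(D 1 + D (-1)) / 2‖ = ‖D 1 + D (-1)‖ / 2 := by
      rw [norm_div, RCLike.norm_ofNat]
    rw [hdiff]
    linarith [norm_sub_le (D 0) ((D 1 + D (-1)) / 2), norm_add_le (D 1) (D (-1)),
      norm_nonneg (D 1 + D (-1))]

lemma norm_le_sum_iteratedDeriv_Mg_testFun {n : ℕ} (hn : n = 1 ∨ n = 2) (hg : HolOn g)
    (hζ : ‖ζ‖ = 1) (hz : z ∈ ball (0 : ℂ) 1) :
    ‖g z‖ ≤ Real.exp π * ∑ c ∈ ({-1, 0, 1} : Finset ℝ),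
      ‖ζ - z‖ ^ n * ‖iteratedDeriv n (Mg g (testFun ζ c)) z‖ := by
  have hw : ζ - z ≠ 0 := sub_ne_zero_of_mem_ball hζ hz
  have hquot : ∀ c ∈ ({-1, 0, 1} : Finset ℝ),
      ‖iteratedDeriv n (Mg g (testFun ζ c)) z / testFun ζ c z‖ ≤
        Real.exp π * ‖iteratedDeriv n (Mg g (testFun ζ c)) z‖ := fun c hc ↦ by
    have hc : |c| ≤ 1 := by
      simp only [Finset.mem_insert, Finset.mem_singleton] at hc
      rcases hc with rfl | rfl | rfl <;> norm_num
    rw [norm_div, div_eq_inv_mul]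
    gcongr
    rw [inv_le_comm₀ (norm_pos_iff.2 testFun_ne_zero) (Real.exp_pos π), ← Real.exp_neg]
    exact (norm_testFun_mem_Icc hc).1
  calc ‖g z‖ = ‖ζ - z‖ ^ n * ‖(ζ - z)⁻¹ ^ n * g z‖ := by
        rw [norm_mul, norm_pow, norm_inv, ← mul_assoc, ← mul_pow,
          mul_inv_cancel₀ (norm_ne_zero_iff.2 hw), one_pow, one_mul]
    _ ≤ ‖ζ - z‖ ^ n * ∑ c ∈ ({-1, 0, 1} : Finset ℝ),
          Real.exp π * ‖iteratedDeriv n (Mg g (testFun ζ c)) z‖ := by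
        gcongr
        exact (norm_inv_pow_mul_le_sum hn hg hζ hz).trans (Finset.sum_le_sum hquot)
    _ = _ := by
        rw [Finset.mul_sum, Finset.mul_sum]
        exact Finset.sum_congr rfl fun c _ ↦ mul_left_comm _ _ _

end TestFunctions

section Radial

variable {p : ℝ} {g : ℂ → ℂ} {ζ : ℂ}

lemma besovOrder_eq_one_or_two (p : ℝ) : besovOrder p = 1 ∨ besovOrder p = 2 := by
  unfold besovOrder
  split_ifs <;> simp

lemma norm_ofReal_mul_of_norm_eq_one (hζ : ‖ζ‖ = 1) {r : ℝ} (hr : 0 ≤ r) :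
    ‖(r : ℂ) * ζ‖ = r := by
  rw [norm_mul, hζ, mul_one, norm_real, Real.norm_of_nonneg hr]

lemma norm_sub_ofReal_mul_of_norm_eq_one (hζ : ‖ζ‖ = 1) {r : ℝ} (hr : r ≤ 1) :
    ‖ζ - r * ζ‖ = 1 - r := by
  rw [← norm_ofReal_mul_of_norm_eq_one hζ (sub_nonneg.2 hr)]
  push_cast
  ring_nf

lemma rpow_norm_le_sum_rpow_iteratedDeriv_Mg_testFun (hp : 1 ≤ p) {n : ℕ}
    (hn : n = 1 ∨ n = 2) (hg : HolOn g) (hζ : ‖ζ‖ = 1) {r : ℝ}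
    (hr : r ∈ Ico (0 : ℝ) 1) :
    ‖g (r * ζ)‖ ^ p ≤ Real.exp π ^ p * 3 ^ (p - 1) * ∑ c ∈ ({-1, 0, 1} : Finset ℝ),
      ((1 - ‖(r : ℂ) * ζ‖) ^ n * ‖iteratedDeriv n (Mg g (testFun ζ c)) (r * ζ)‖) ^ p := by
  have hnorm := norm_ofReal_mul_of_norm_eq_one hζ hr.1
  have hcard : (({-1, 0, 1} : Finset ℝ).card : ℝ) = 3 := by
    rw [Finset.card_eq_three.2 ⟨-1, 0, 1, by norm_num, by norm_num, by norm_num, rfl⟩]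
    norm_num
  have hle := norm_le_sum_iteratedDeriv_Mg_testFun hn hg hζ (z := r * ζ)
    (by rw [mem_ball_zero_iff, hnorm]; exact hr.2)
  rw [norm_sub_ofReal_mul_of_norm_eq_one hζ hr.2.le] at hle
  have hr' : 0 ≤ 1 - r := sub_nonneg.2 hr.2.le
  rw [hnorm, mul_assoc, ← hcard]
  refine (Real.rpow_le_rpow (norm_nonneg _) hle (by positivity)).trans ?_
  rw [Real.mul_rpow (Real.exp_pos π).le (by positivity)]
  gcongr
  exact Real.rpow_sum_le_const_mul_sum_rpow_of_nonneg _ hp fun c _ ↦ by positivity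

lemma exists_isFiniteMeasure_rpow_norm_le {s : ℝ} (hp : 1 ≤ p) (hs : 0 < s)
    (hg : HolOn g) (hM : MapsInto (Mg g) (Qs s) (BesovFull p)) (hζ : ‖ζ‖ = 1) :
    ∃ μ : Measure ℂ, IsFiniteMeasure μ ∧ ∀ r ∈ Ico (0 : ℝ) 1,
      ENNReal.ofReal (‖g (r * ζ)‖ ^ p) ≤ μ (ball (r * ζ) ((1 - r) / 2)) := by
  set C : ENNReal := ENNReal.ofReal (Real.exp π ^ p * 3 ^ (p - 1)) *
    ENNReal.ofReal (4 * 2 ^ |besovOrder p * p - 2|) with hC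
  set μ : Measure ℂ := ∑ c ∈ ({-1, 0, 1} : Finset ℝ), besovMeasure p (Mg g (testFun ζ c))
  have hμ : μ univ < ⊤ := by
    rw [Measure.finsetSum_apply, ENNReal.sum_lt_top]
    intro c hc
    have hc : |c| ≤ 1 := by
      simp only [Finset.mem_insert, Finset.mem_singleton] at hc
      rcases hc with rfl | rfl | rfl <;> norm_num
    exact (mem_BesovFull_iff.1 (hM _ (testFun_mem_Qs hs hζ hc))).2
  refine ⟨C • μ, ⟨?_⟩, fun r hr ↦ ?_⟩
  · exact ENNReal.mul_lt_top (ENNReal.mul_lt_top ENNReal.ofReal_lt_top ENNReal.ofReal_lt_top) hμ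
  · have hnorm := norm_ofReal_mul_of_norm_eq_one hζ hr.1
    refine (ENNReal.ofReal_le_ofReal (rpow_norm_le_sum_rpow_iteratedDeriv_Mg_testFun hp
      (besovOrder_eq_one_or_two p) hg hζ hr)).trans ?_
    have hr' : 0 ≤ 1 - ‖(r : ℂ) * ζ‖ := by linarith [hr.2]
    rw [ENNReal.ofReal_mul (by positivity),
      ENNReal.ofReal_sum_of_nonneg fun c _ ↦ by positivity, Measure.smul_apply,
      Measure.finsetSum_apply, smul_eq_mul, hC, mul_assoc]
    refine mul_le_mul_right ?_ _
    rw [Finset.mul_sum]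
    refine Finset.sum_le_sum fun c _ ↦ ?_
    simpa only [hnorm] using
      ofReal_rpow_le_besovMeasure_ball hp (hg.Mg_testFun hζ) (hnorm.trans_lt hr.2)

/-- The radii `r_k = 1 - 4⁻ᵏ` at which `g` is sampled. -/
noncomputable def radius (k : ℕ) : ℝ := 1 - (1 / 4) ^ k

lemma radius_mem_Ico (k : ℕ) : radius k ∈ Ico (0 : ℝ) 1 := by
  have hle : (1 / 4 : ℝ) ^ k ≤ 1 := pow_le_one₀ (by norm_num) (by norm_num)
  have hpos : 0 < (1 / 4 : ℝ) ^ k := by positivity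
  rw [radius]
  constructor <;> linarith

lemma tendsto_radius : Tendsto radius atTop (nhds 1) := by
  have hpow := tendsto_pow_atTop_nhds_zero_of_lt_one (r := (1 / 4 : ℝ)) (by norm_num) (by norm_num)
  have hsub := hpow.const_sub 1
  rwa [sub_zero] at hsub

lemma pairwise_disjoint_ball_radius (hζ : ‖ζ‖ = 1) :
    Pairwise (Function.onFun Disjoint fun k ↦ ball (radius k * ζ) ((1 - radius k) / 2)) := by
  refine (pairwise_disjoint_on _).2 fun j k hjk ↦ ball_disjoint_ball ?_
  have hpow : (1 / 4 : ℝ) ^ k ≤ (1 / 4) ^ (j + 1) :=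
    pow_le_pow_of_le_one (by norm_num) (by norm_num) hjk
  have hpos : 0 < (1 / 4 : ℝ) ^ j := by positivity
  rw [pow_succ] at hpow
  rw [dist_comm, dist_eq_norm, ← sub_mul, ← ofReal_sub,
    norm_ofReal_mul_of_norm_eq_one hζ (by simp only [radius]; linarith)]
  simp only [radius]
  linarith

/-- The directions `ζ` along which `g` is bounded by `N` and its `p`-th powers at the points
`r_k ζ` have sum at most `N`. -/
def radialBoundSet (p : ℝ) (g : ℂ → ℂ) (N : ℝ) : Set ℂ :=
  {ζ | (∀ r ∈ Ico (0 : ℝ) 1, ‖g (r * ζ)‖ ≤ N) ∧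
    ∀ K : ℕ, ∑ k ∈ Finset.range K, ‖g (radius k * ζ)‖ ^ p ≤ N}

lemma exists_mem_radialBoundSet (hp : 1 ≤ p) (hζ : ‖ζ‖ = 1)
    {μ : Measure ℂ} [IsFiniteMeasure μ] (hμ : ∀ r ∈ Ico (0 : ℝ) 1,
      ENNReal.ofReal (‖g (r * ζ)‖ ^ p) ≤ μ (ball (r * ζ) ((1 - r) / 2))) :
    ∃ N : ℕ, ζ ∈ radialBoundSet p g N := by
  obtain ⟨N, hN⟩ := exists_nat_ge (μ.real univ + 1)
  have htop : μ univ ≠ ⊤ := measure_ne_top μ univ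
  refine ⟨N, fun r hr ↦ ?_, fun K ↦ ?_⟩
  · have hpow : ‖g (r * ζ)‖ ^ p ≤ μ.real univ :=
      (ENNReal.ofReal_le_iff_le_toReal htop).1 ((hμ r hr).trans (measure_mono (subset_univ _)))
    have hself : ‖g (r * ζ)‖ ≤ max 1 (‖g (r * ζ)‖ ^ p) := by
      rcases le_total ‖g (r * ζ)‖ 1 with h | h
      · exact le_max_of_le_left h
      · exact le_max_of_le_right (Real.self_le_rpow_of_one_le h hp)
    refine hself.trans (max_le ?_ ?_)
    · linarith [measureReal_nonneg (μ := μ) (s := univ)]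
    · linarith
  · have hsum : ENNReal.ofReal (∑ k ∈ Finset.range K, ‖g (radius k * ζ)‖ ^ p) ≤ μ univ := by
      rw [ENNReal.ofReal_sum_of_nonneg fun _ _ ↦ by positivity]
      exact (Finset.sum_le_sum fun k _ ↦ hμ _ (radius_mem_Ico k)).trans
        (sum_measure_le_measure_univ (fun k _ ↦ measurableSet_ball.nullMeasurableSet)
          fun i _ j _ hij ↦ (pairwise_disjoint_ball_radius hζ hij).aedisjoint)
    linarith [(ENNReal.ofReal_le_iff_le_toReal htop).1 hsum, Measure.real_def μ univ]

lemma isClosed_preimage_radialBoundSet (hp : 0 ≤ p) (hg : HolOn g) (N : ℝ) :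
    IsClosed ((↑) ⁻¹' radialBoundSet p g N : Set (sphere (0 : ℂ) 1)) := by
  have hcont {r : ℝ} (hr : r ∈ Ico (0 : ℝ) 1) :
      Continuous fun ζ : sphere (0 : ℂ) 1 ↦ ‖g (r * (ζ : ℂ))‖ := by
    refine (hg.continuousOn.comp_continuous (by fun_prop) fun ζ ↦ ?_).norm
    rw [mem_ball_zero_iff, norm_ofReal_mul_of_norm_eq_one (mem_sphere_zero_iff_norm.1 ζ.2) hr.1]
    exact hr.2
  have hsum (K : ℕ) : Continuous fun ζ : sphere (0 : ℂ) 1 ↦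
      ∑ k ∈ Finset.range K, ‖g (radius k * (ζ : ℂ))‖ ^ p :=
    continuous_finsetSum _ fun k _ ↦ (hcont (radius_mem_Ico k)).rpow_const fun _ ↦ Or.inr hp
  simp only [radialBoundSet, ofPred_and, ofPred_forall, preimage_inter, preimage_iInter]
  exact (isClosed_biInter fun r hr ↦ isClosed_le (hcont hr) continuous_const).inter
    (isClosed_iInter fun K ↦ isClosed_le (hsum K) continuous_const)

lemma exists_sphere_inter_ball_subset_radialBoundSet (hp : 0 ≤ p)
    (hg : HolOn g) (hbdd : ∀ ζ : ℂ, ‖ζ‖ = 1 → ∃ N : ℕ, ζ ∈ radialBoundSet p g N) :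
    ∃ ζ₀ : ℂ, ‖ζ₀‖ = 1 ∧ ∃ δ > 0, ∃ N : ℝ, sphere 0 1 ∩ ball ζ₀ δ ⊆ radialBoundSet p g N := by
  have : Nonempty (sphere (0 : ℂ) 1) := (NormedSpace.sphere_nonempty.2 zero_le_one).to_subtype
  have hcover : ⋃ N : ℕ, ((↑) ⁻¹' radialBoundSet p g N : Set (sphere (0 : ℂ) 1)) = univ :=
    eq_univ_of_forall fun ζ ↦ mem_iUnion.2 (hbdd ζ (mem_sphere_zero_iff_norm.1 ζ.2))
  obtain ⟨N, ζ₀, hζ₀⟩ := nonempty_interior_of_iUnion_of_closed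
    (fun N : ℕ ↦ isClosed_preimage_radialBoundSet hp hg N) hcover
  obtain ⟨δ, hδ, hsub⟩ := Metric.mem_nhds_iff.1 (mem_interior_iff_mem_nhds.1 hζ₀)
  exact ⟨ζ₀, mem_sphere_zero_iff_norm.1 ζ₀.2, δ, hδ, N, fun ζ hζ ↦ @hsub ⟨ζ, hζ.1⟩ hζ.2⟩

end Radial

section Lens

lemma sum_norm_rpow_le_of_forall_mem_frontier {ι E F : Type*} [Fintype ι] [NormedAddCommGroup E]
    [NormedSpace ℂ E] [Nontrivial E] [NormedAddCommGroup F] [NormedSpace ℂ F] {p : ℝ} (hp : 1 ≤ p)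
    {f : ι → E → F} {U : Set E} (hU : Bornology.IsBounded U)
    (hf : ∀ i, DifferentiableOn ℂ (f i) (closure U)) {C : ℝ} (hC₀ : 0 ≤ C)
    (hC : ∀ z ∈ frontier U, ∑ i, ‖f i z‖ ^ p ≤ C) {z : E} (hz : z ∈ closure U) :
    ∑ i, ‖f i z‖ ^ p ≤ C := by
  have hp₀ : 0 < p := zero_lt_one.trans_le hp
  have hq : (ENNReal.ofReal p).toReal = p := ENNReal.toReal_ofReal hp₀.le
  have : Fact (1 ≤ ENNReal.ofReal p) := ⟨ENNReal.one_le_ofReal.2 hp⟩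
  set G : E → PiLp (ENNReal.ofReal p) fun _ : ι ↦ F := fun z ↦ WithLp.toLp _ fun i ↦ f i z
  have hnorm (z : E) : ‖G z‖ = (∑ i, ‖f i z‖ ^ p) ^ p⁻¹ := by
    rw [PiLp.norm_eq_sum (by rwa [hq]), hq, one_div]
  have hG : DifferentiableOn ℂ G (closure U) := (differentiableOn_piLp _).2 hf
  have hmax := Complex.norm_le_of_forall_mem_frontier_norm_le hU hG.diffContOnCl
    (C := C ^ p⁻¹) (fun w hw ↦ by rw [hnorm]; gcongr; exact hC w hw) hz
  rwa [hnorm, Real.rpow_le_rpow_iff (by positivity) hC₀ (inv_pos.2 hp₀)] at hmax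

/-- The intersection of the unit disc with the unit disc centred at `c`, which is invariant under
the reflection `z ↦ c - z`. -/
def lens (c : ℂ) : Set ℂ := ball 0 1 ∩ ball c 1

/-- The closed version of `lens c`. -/
def closedLens (c : ℂ) : Set ℂ := closedBall 0 1 ∩ closedBall c 1

variable {c z : ℂ}

lemma mem_lens_iff : z ∈ lens c ↔ ‖z‖ < 1 ∧ ‖c - z‖ < 1 := by
  rw [lens, mem_inter_iff, mem_ball_zero_iff, mem_ball_iff_norm']

lemma isOpen_lens : IsOpen (lens c) := isOpen_ball.inter isOpen_ball

lemma isBounded_lens : Bornology.IsBounded (lens c) := isBounded_ball.subset inter_subset_left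

lemma isPreconnected_lens : IsPreconnected (lens c) :=
  ((convex_ball 0 1).inter (convex_ball c 1)).isPreconnected

lemma half_mem_lens (hc : ‖c‖ < 2) : c / 2 ∈ lens c := by
  have hhalf : c - c / 2 = c / 2 := sub_half c
  rw [mem_lens_iff, hhalf, norm_div, RCLike.norm_ofNat]
  constructor <;> linarith

lemma mem_closedLens_iff : z ∈ closedLens c ↔ ‖z‖ ≤ 1 ∧ ‖c - z‖ ≤ 1 := by
  rw [closedLens, mem_inter_iff, mem_closedBall_zero_iff, mem_closedBall_iff_norm']

lemma sub_mem_closedLens (hz : z ∈ closedLens c) : c - z ∈ closedLens c := by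
  rw [mem_closedLens_iff] at hz ⊢
  rwa [sub_sub_cancel, and_comm]

lemma closure_lens_subset_closedLens : closure (lens c) ⊆ closedLens c :=
  closure_minimal (inter_subset_inter ball_subset_closedBall ball_subset_closedBall)
    (isClosed_closedBall.inter isClosed_closedBall)

lemma norm_eq_or_norm_eq_of_mem_frontier_lens (hz : z ∈ frontier (lens c)) :
    ‖z‖ = 1 ∨ ‖c - z‖ = 1 := by
  rw [isOpen_lens.frontier_eq, Set.mem_sdiff, mem_lens_iff, not_and_or, not_lt, not_lt] at hz
  obtain ⟨hz₁, hz₂⟩ := mem_closedLens_iff.1 (closure_lens_subset_closedLens hz.1)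
  exact hz.2.imp hz₁.antisymm hz₂.antisymm

lemma exists_forall_norm_sub_lt_of_norm_le {E : Type*} [NormedAddCommGroup E]
    [InnerProductSpace ℝ E] {ζ₀ : E} (hζ₀ : ‖ζ₀‖ = 1) {δ : ℝ} (hδ : 0 < δ) :
    ∃ c : E, ‖c‖ < 2 ∧ ∀ z, ‖z‖ ≤ 1 → ‖c - z‖ ≤ 1 → ‖z - ζ₀‖ < δ := by
  obtain ⟨t, ht₀, ht⟩ : ∃ t : ℝ, 0 < t ∧ t < min δ 1 := exists_between (by positivity)
  obtain ⟨htδ, ht₁⟩ := lt_min_iff.1 ht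
  have hsq : t ^ 2 < t := by nlinarith
  have hc : ‖(2 - t ^ 2 / 2) • ζ₀‖ = 2 - t ^ 2 / 2 := by
    rw [norm_smul, hζ₀, mul_one, Real.norm_of_nonneg (by linarith)]
  refine ⟨(2 - t ^ 2 / 2) • ζ₀, by rw [hc]; linarith [sq_pos_of_pos ht₀], fun z hz₁ hz₂ ↦ ?_⟩
  set c := (2 - t ^ 2 / 2) • ζ₀ with hcdef
  have hdiff : ‖z - (c - z)‖ ≤ 3 / 2 * t := by
    have hpar := parallelogram_law_with_norm ℝ z (c - z)
    rw [add_sub_cancel, hc] at hpar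
    refine abs_le_of_sq_le_sq' ?_ (by positivity) |>.2
    nlinarith [norm_nonneg z, norm_nonneg (c - z)]
  have hsplit : z - ζ₀ = (1 / 2 : ℝ) • (z - (c - z)) - (t ^ 2 / 4) • ζ₀ := by
    rw [hcdef]
    module
  calc ‖z - ζ₀‖ ≤ ‖(1 / 2 : ℝ) • (z - (c - z))‖ + ‖(t ^ 2 / 4) • ζ₀‖ := by
        rw [hsplit]
        exact norm_sub_le _ _
    _ = 1 / 2 * ‖z - (c - z)‖ + t ^ 2 / 4 := by
        rw [norm_smul, norm_smul, hζ₀, mul_one, Real.norm_of_nonneg one_half_pos.le,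
          Real.norm_of_nonneg (by positivity)]
    _ < δ := by linarith

lemma exists_norm_smul_eq_and_norm_sub_le {E : Type*} [NormedAddCommGroup E] [NormedSpace ℝ E]
    {ζ₀ : E} (hζ₀ : ‖ζ₀‖ = 1) (z : E) :
    ∃ ζ : E, ‖ζ‖ = 1 ∧ ‖z‖ • ζ = z ∧ ‖ζ - ζ₀‖ ≤ 2 * ‖z - ζ₀‖ := by
  rcases eq_or_ne z 0 with rfl | hz
  · exact ⟨ζ₀, hζ₀, by simp, by simp⟩
  have hζ : ‖‖z‖⁻¹ • z‖ = 1 := norm_smul_inv_norm (𝕜 := ℝ) hz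
  have hsmul : ‖z‖ • ‖z‖⁻¹ • z = z := smul_inv_smul₀ (norm_ne_zero_iff.2 hz) z
  refine ⟨‖z‖⁻¹ • z, hζ, hsmul, ?_⟩
  set ζ := ‖z‖⁻¹ • z
  have hsub : ‖ζ - z‖ = |‖ζ₀‖ - ‖z‖| := by
    nth_rw 1 [← hsmul]
    rw [show ζ - ‖z‖ • ζ = (1 - ‖z‖) • ζ by module, norm_smul, hζ, mul_one, hζ₀, Real.norm_eq_abs]
  linarith [norm_sub_le_norm_sub_add_norm_sub ζ z ζ₀, abs_norm_sub_norm_le ζ₀ z,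
    norm_sub_rev ζ₀ z]

variable {p N : ℝ} {g : ℂ → ℂ}

/-- The points whose direction, seen from `0`, lies in `radialBoundSet p g N`. -/
def radialBoundCone (p : ℝ) (g : ℂ → ℂ) (N : ℝ) : Set ℂ :=
  {z | ∃ ζ ∈ radialBoundSet p g N, ‖ζ‖ = 1 ∧ ‖z‖ * ζ = z}

lemma exists_closedLens_subset_radialBoundCone {ζ₀ : ℂ} (hζ₀ : ‖ζ₀‖ = 1) {δ : ℝ} (hδ : 0 < δ)
    (hsub : sphere 0 1 ∩ ball ζ₀ δ ⊆ radialBoundSet p g N) :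
    ∃ c : ℂ, ‖c‖ < 2 ∧ closedLens c ⊆ radialBoundCone p g N := by
  obtain ⟨c, hc, hclose⟩ := exists_forall_norm_sub_lt_of_norm_le hζ₀ (half_pos hδ)
  refine ⟨c, hc, fun z hz ↦ ?_⟩
  obtain ⟨hz₁, hz₂⟩ := mem_closedLens_iff.1 hz
  obtain ⟨ζ, hζ, hζz, hdist⟩ := exists_norm_smul_eq_and_norm_sub_le hζ₀ z
  refine ⟨ζ, hsub ⟨mem_sphere_zero_iff_norm.2 hζ, mem_ball_iff_norm.2 ?_⟩, hζ, ?_⟩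
  · linarith [hclose z hz₁ hz₂]
  · rwa [← real_smul]

lemma sum_rpow_norm_mul_le_of_norm_eq_one (hlens : closedLens c ⊆ radialBoundCone p g N)
    (hp : 0 ≤ p) (hz : z ∈ closedLens c) (hz₁ : ‖z‖ = 1) (K : ℕ) :
    ∑ k ∈ Finset.range K, ‖g (radius k * z) * g (radius k * (c - z))‖ ^ p ≤ N ^ p * N := by
  obtain ⟨ζ, hζmem, -, hζz⟩ := hlens hz
  obtain ⟨ξ, hξmem, -, hξz⟩ := hlens (sub_mem_closedLens hz)
  rw [hz₁, ofReal_one, one_mul] at hζz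
  have hz₂ : ‖c - z‖ ≤ 1 := (mem_closedLens_iff.1 hz).2
  have hbdd (k : ℕ) : ‖g (radius k * (c - z))‖ ≤ N := by
    rw [← hξz, ← mul_assoc, ← ofReal_mul]
    have hr := radius_mem_Ico k
    exact hξmem.1 _ ⟨mul_nonneg hr.1 (norm_nonneg _),
      (mul_le_of_le_one_right hr.1 hz₂).trans_lt hr.2⟩
  have hN : 0 ≤ N := (norm_nonneg _).trans (hbdd 0)
  calc ∑ k ∈ Finset.range K, ‖g (radius k * z) * g (radius k * (c - z))‖ ^ p
      ≤ ∑ k ∈ Finset.range K, N ^ p * ‖g (radius k * z)‖ ^ p := by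
        gcongr with k
        rw [norm_mul, mul_comm, Real.mul_rpow (norm_nonneg _) (norm_nonneg _)]
        gcongr
        exact hbdd k
    _ ≤ N ^ p * N := by
        rw [← Finset.mul_sum, ← hζz]
        gcongr
        exact hζmem.2 K

lemma HolOn.differentiableOn_comp_radius_mul (hg : HolOn g) (k : ℕ) {h : ℂ → ℂ} {U : Set ℂ}
    (hh : DifferentiableOn ℂ h U) (hU : MapsTo h U (closedBall 0 1)) :
    DifferentiableOn ℂ (fun z ↦ g (radius k * h z)) U := by
  refine DifferentiableOn.comp hg (hh.const_mul _) fun z hz ↦ ?_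
  have hr := radius_mem_Ico k
  have hz := mem_closedBall_zero_iff.1 (hU hz)
  rw [mem_ball_zero_iff, norm_mul, norm_real, Real.norm_of_nonneg hr.1]
  exact (mul_le_of_le_one_right hr.1 hz).trans_lt hr.2

lemma sum_rpow_norm_mul_le_of_mem_lens (hlens : closedLens c ⊆ radialBoundCone p g N)
    (hp : 1 ≤ p) (hg : HolOn g) (hz : z ∈ lens c) (K : ℕ) :
    ∑ k ∈ Finset.range K, ‖g (radius k * z) * g (radius k * (c - z))‖ ^ p ≤ N ^ p * N := by
  have hp₀ : 0 ≤ p := zero_le_one.trans hp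
  have hN : 0 ≤ N := by
    obtain ⟨ζ, hζ, -⟩ := hlens (closure_lens_subset_closedLens (subset_closure hz))
    exact hζ.2 0
  have hdiff (k : Fin K) : DifferentiableOn ℂ
      (fun z ↦ g (radius k * z) * g (radius k * (c - z))) (closure (lens c)) := by
    refine (hg.differentiableOn_comp_radius_mul k differentiableOn_id fun w hw ↦ ?_).mul
      (hg.differentiableOn_comp_radius_mul k (differentiableOn_id.const_sub c) fun w hw ↦ ?_)
    · exact (closure_lens_subset_closedLens hw).1
    · exact (sub_mem_closedLens (closure_lens_subset_closedLens hw)).1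
  rw [Finset.sum_range]
  refine sum_norm_rpow_le_of_forall_mem_frontier hp isBounded_lens hdiff (by positivity)
    (fun w hw ↦ ?_) (subset_closure hz)
  rw [← Finset.sum_range fun k ↦ ‖g (radius k * w) * g (radius k * (c - w))‖ ^ p]
  have hwc := closure_lens_subset_closedLens (frontier_subset_closure hw)
  rcases norm_eq_or_norm_eq_of_mem_frontier_lens hw with hw₁ | hw₂
  · exact sum_rpow_norm_mul_le_of_norm_eq_one hlens hp₀ hwc hw₁ K
  · simpa only [sub_sub_cancel, mul_comm (g (radius _ * (c - w)))] using
      sum_rpow_norm_mul_le_of_norm_eq_one hlens hp₀ (sub_mem_closedLens hwc) hw₂ K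

lemma HolOn.tendsto_radius_mul (hg : HolOn g) (hz : ‖z‖ < 1) :
    Tendsto (fun k ↦ g (radius k * z)) atTop (nhds (g z)) := by
  have hcont : ContinuousAt g z := (hg.hasDerivAt (mem_ball_zero_iff.2 hz)).continuousAt
  refine hcont.tendsto.comp ?_
  have hradius : Tendsto (fun k ↦ (radius k : ℂ)) atTop (nhds 1) :=
    (continuous_ofReal.tendsto' 1 1 ofReal_one).comp tendsto_radius
  simpa only [one_mul] using hradius.mul_const z

lemma mul_comp_sub_eq_zero_of_mem_lens (hlens : closedLens c ⊆ radialBoundCone p g N)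
    (hp : 1 ≤ p) (hg : HolOn g) (hz : z ∈ lens c) : g z * g (c - z) = 0 := by
  have hp₀ : 0 < p := zero_lt_one.trans_le hp
  obtain ⟨hz₁, hz₂⟩ := mem_lens_iff.1 hz
  have hzero : Tendsto (fun k ↦ ‖g (radius k * z) * g (radius k * (c - z))‖ ^ p) atTop (nhds 0) :=
    (summable_of_sum_range_le (fun _ ↦ by positivity)
      (sum_rpow_norm_mul_le_of_mem_lens hlens hp hg hz)).tendsto_atTop_zero
  have hlim := ((hg.tendsto_radius_mul hz₁).mul (hg.tendsto_radius_mul hz₂)).norm.rpow_const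
    (p := p) (Or.inr hp₀.le)
  rw [← norm_eq_zero, ← Real.rpow_eq_zero (norm_nonneg _) hp₀.ne']
  exact tendsto_nhds_unique hlim hzero

lemma HolOn.eq_zero_of_mul_comp_sub_eq_zero (hg : HolOn g) (hc : ‖c‖ < 2)
    (hmul : ∀ z ∈ lens c, g z * g (c - z) = 0) : ∀ z ∈ ball (0 : ℂ) 1, g z = 0 := by
  have hana : AnalyticOnNhd ℂ g (ball 0 1) := DifferentiableOn.analyticOnNhd hg isOpen_ball
  have hmaps : MapsTo (fun z ↦ c - z) (lens c) (lens c) := fun z hz ↦ by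
    rw [mem_lens_iff] at hz ⊢
    rwa [sub_sub_cancel, and_comm]
  have hrefl : AnalyticOnNhd ℂ (fun z ↦ g (c - z)) (lens c) :=
    (hana.mono inter_subset_left).comp (analyticOnNhd_const.sub analyticOnNhd_id) hmaps
  have hzero : ∀ z ∈ lens c, g z = 0 := by
    rcases (hana.mono inter_subset_left).eq_zero_or_eq_zero_of_mul_eq_zero hrefl hmul
      isPreconnected_lens with h | h
    · exact h
    · intro z hz
      simpa only [sub_sub_cancel] using h _ (hmaps hz)
  have hmid := half_mem_lens hc
  exact hana.eqOn_zero_of_preconnected_of_eventuallyEq_zero (convex_ball 0 1).isPreconnected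
    hmid.1 (mem_of_superset (isOpen_lens.mem_nhds hmid) hzero)

end Lens

lemma mem_BesovFull_of_eqOn_zero {p : ℝ} (hp : p ≠ 0) {f : ℂ → ℂ}
    (hf : ∀ z ∈ ball (0 : ℂ) 1, f z = 0) : f ∈ BesovFull p := by
  have hhol : HolOn f := (differentiableOn_const 0).congr hf
  refine mem_BesovFull_iff.2 ⟨hhol, ?_⟩
  have hderiv : ∀ z ∈ ball (0 : ℂ) 1, iteratedDeriv (besovOrder p) f z = 0 := fun z hz ↦ by
    have hzero : f =ᶠ[nhds z] fun _ ↦ 0 := by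
      filter_upwards [isOpen_ball.mem_nhds hz] with w hw using hf w hw
    rw [hzero.iteratedDeriv_eq, iteratedDeriv_const, ite_self]
  rw [besovMeasure, withDensity_apply _ .univ, Measure.restrict_univ,
    setLIntegral_congr_fun (g := 0) measurableSet_ball fun z hz ↦ by
      simp [hderiv z hz, Real.zero_rpow hp]]
  simp

theorem stmt14_general (p s : ℝ) (hp : 1 ≤ p) (hs : 0 < s) (g : ℂ → ℂ) :
    MapsInto (Mg g) (Qs s) (BesovFull p) ↔ ∀ z ∈ ball (0 : ℂ) 1, g z = 0 := by
  have hp₀ : 0 < p := zero_lt_one.trans_le hp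
  refine ⟨fun hM ↦ ?_, fun hzero f _ ↦ ?_⟩
  · have hg : HolOn g := by
      have hmem := hM _ (testFun_mem_Qs hs norm_one (c := 0) (by simp))
      have hMg : Mg g (testFun 1 0) = g := by rw [testFun_zero]; exact mul_one g
      exact hMg ▸ (mem_BesovFull_iff.1 hmem).1
    have hbdd : ∀ ζ : ℂ, ‖ζ‖ = 1 → ∃ N : ℕ, ζ ∈ radialBoundSet p g N := fun ζ hζ ↦ by
      obtain ⟨μ, _, hμ⟩ := exists_isFiniteMeasure_rpow_norm_le hp hs hg hM hζ
      exact exists_mem_radialBoundSet hp hζ hμ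
    obtain ⟨ζ₀, hζ₀, δ, hδ, N, hsub⟩ :=
      exists_sphere_inter_ball_subset_radialBoundSet hp₀.le hg hbdd
    obtain ⟨c, hc, hlens⟩ := exists_closedLens_subset_radialBoundCone hζ₀ hδ hsub
    exact hg.eq_zero_of_mul_comp_sub_eq_zero hc fun z ↦
      mul_comp_sub_eq_zero_of_mem_lens hlens hp hg
  · exact mem_BesovFull_of_eqOn_zero hp₀.ne' fun z hz ↦ by rw [Mg, hzero z hz, zero_mul]

/-- For `0 < s < ∞`, `1 ≤ p < ∞`, and `g` holomorphic on the unit disc: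
`M_g` maps `Q_s` into `Bᵖ` iff `g ≡ 0` (on the disc). -/
theorem stmt14 (p s : ℝ) (hp : 1 ≤ p) (hs : 0 < s) (g : ℂ → ℂ) (hg : HolOn g) :
    MapsInto (Mg g) (Qs s) (BesovFull p) ↔ ∀ z ∈ Metric.ball (0:ℂ) 1, g z = 0 :=
  stmt14_general p s hp hs g
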